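/- arXiv:1102.0959 — 6 statements merged into one kernel-verified Lean document; each statement's English description precedes it below -/
import Mathlib

section
/- Let n ≥ 2 be an integer and let α ≥ 1 be a real number such that (α² + n − 1)^{(n−2)/2} (α² − 1) < α^n. Set a = (α² + n − 1)^{(n−2)/2} (α² − 1) / α^n and b = n (α² + n − 1)^{(n−2)/2} / α. Then a < 1, and for all real X, Y ≥ 0 one has (X² + (n−1)Y²)^{n/2} ≥ a·X^n + b·X·Y^{n−1}, with equality if and only if X = α·Y. -/
/-!
Write `m` for the exponent `n`, which may be real, and put `κ = (α² + m - 1)⁻¹`. After the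
substitution `X = α x`, `Y = y` and division by `(α² + m - 1)^(m/2)`, the claim is a comparison of
two homogeneous functions of degree `m`, and setting `x = 1`, `y² = v` turns it into the
Bernoulli-type inequality
`1 - mκ + mκ v^((m-1)/2) ≤ (1 - (m-1)κ + (m-1)κ v)^(m/2)` with equality only at `v = 1`.
The hypothesis on `α` says exactly that this inequality is strict at `v = 0`.

The derivative of the difference (right side minus left) has the sign of
`(m/2 - 1) log (1 - (m-1)κ + (m-1)κ v) - ((m-1)/2 - 1) log v`, which is a convex function of
`log v` vanishing at `v = 1`. Since the difference is smaller at `1` than at `0`, its derivative is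
negative somewhere on `(0, 1)`, and convexity then forces it to be positive on `(1, ∞)` and
to change sign at most once, from positive to negative, on `(0, 1)`. So the minimum is at `1`.
-/

open Set

theorem lt_of_hasDerivAt_of_single_crossing {f f' : ℝ → ℝ} {a c x : ℝ}
    (hf : ContinuousOn f (Ici a)) (hf' : ∀ y, a < y → HasDerivAt f (f' y) y)
    (hcross : ∀ p q r, a < p → p < q → q < r → f' p < 0 → 0 ≤ f' q → 0 < f' r)
    (hac : a < c) (hc : f' c = 0) (hlt : f c < f a) (hx : a ≤ x) (hxc : x ≠ c) :
    f c < f x := by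
  have exists_slope {p q : ℝ} (hp : a ≤ p) (hpq : p < q) :
      ∃ r ∈ Ioo p q, f' r = (f q - f p) / (q - p) :=
    exists_hasDerivAt_eq_slope f f' hpq (hf.mono fun y hy ↦ hp.trans hy.1)
      fun y hy ↦ hf' y (hp.trans_lt hy.1)
  have exists_neg {q : ℝ} (hq : a < q) (hfq : f q < f a) : ∃ r ∈ Ioo a q, f' r < 0 := by
    obtain ⟨r, hr, hslope⟩ := exists_slope le_rfl hq
    exact ⟨r, hr, hslope ▸ div_neg_of_neg_of_pos (sub_neg.2 hfq) (sub_pos.2 hq)⟩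
  rcases hxc.lt_or_gt with hxc | hcx
  · by_contra! hle
    have hax : a < x := hx.lt_of_ne (by rintro rfl; exact hle.not_gt hlt)
    obtain ⟨p, hp, hp_neg⟩ := exists_neg hax (hle.trans_lt hlt)
    obtain ⟨q, hq, hslope⟩ := exists_slope hx hxc
    have hq_nonneg : 0 ≤ f' q :=
      hslope ▸ div_nonneg (sub_nonneg.2 hle) (sub_nonneg.2 hxc.le)
    exact (hcross p q c hp.1 (hp.2.trans hq.1) hq.2 hp_neg hq_nonneg).ne' hc
  · obtain ⟨p, hp, hp_neg⟩ := exists_neg hac hlt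
    obtain ⟨r, hr, hslope⟩ := exists_slope hac.le hcx
    have hr_pos : 0 < f' r := hcross p c r hp.1 hp.2 hr.1 hp_neg hc.ge
    rw [hslope, div_pos_iff_of_pos_right (sub_pos.2 hcx)] at hr_pos
    exact sub_pos.1 hr_pos

theorem convexOn_log_add_mul_exp {A B : ℝ} (hA : 0 < A) (hB : 0 ≤ B) :
    ConvexOn ℝ univ fun t ↦ Real.log (A + B * Real.exp t) := by
  have hpos (t : ℝ) : 0 < A + B * Real.exp t := by positivity
  have hderiv (t : ℝ) : HasDerivAt (fun t ↦ Real.log (A + B * Real.exp t))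
      (B * Real.exp t / (A + B * Real.exp t)) t :=
    (((Real.hasDerivAt_exp t).const_mul B).const_add A).log (hpos t).ne'
  refine Monotone.convexOn_univ_of_deriv (fun t ↦ (hderiv t).differentiableAt) fun s t hst ↦ ?_
  have hexp : B * Real.exp s ≤ B * Real.exp t := by gcongr
  rw [(hderiv s).deriv, (hderiv t).deriv, div_le_div_iff₀ (hpos s) (hpos t)]
  linear_combination A * hexp

theorem rpow_lt_affine_rpow_of_crossing {A B p q x y z : ℝ} (hA : 0 < A) (hB : 0 ≤ B)
    (hp : 0 ≤ p) (hx : 0 < x) (hxy : x < y) (hyz : y < z)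
    (hlt : (A + B * x) ^ p < x ^ q) (hle : y ^ q ≤ (A + B * y) ^ p) :
    z ^ q < (A + B * z) ^ p := by
  set ψ : ℝ → ℝ := fun t ↦ p * Real.log (A + B * Real.exp t) - q * t with hψ
  have hconvex : ConvexOn ℝ univ ψ :=
    ((convexOn_log_add_mul_exp hA hB).smul hp).sub ((LinearMap.mulLeft ℝ q).concaveOn convex_univ)
  have hψ_log {v : ℝ} (hv : 0 < v) :
      ψ (Real.log v) = Real.log ((A + B * v) ^ p) - Real.log (v ^ q) := by
    rw [hψ, Real.log_rpow (by positivity), Real.log_rpow hv]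
    simp only [Real.exp_log hv]
  have hy := hx.trans hxy
  have hz := hy.trans hyz
  have hx_neg : ψ (Real.log x) < 0 := by
    rw [hψ_log hx, sub_neg]
    exact Real.log_lt_log (by positivity) hlt
  have hy_nonneg : 0 ≤ ψ (Real.log y) := by
    rw [hψ_log hy, sub_nonneg]
    exact Real.log_le_log (by positivity) hle
  have hmem : Real.log y ∈ openSegment ℝ (Real.log x) (Real.log z) := by
    rw [openSegment_eq_Ioo (Real.log_lt_log hx (hxy.trans hyz))]
    exact ⟨Real.log_lt_log hx hxy, Real.log_lt_log hy hyz⟩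
  have hz_pos : 0 < ψ (Real.log z) := hy_nonneg.trans_lt <|
    hconvex.lt_right_of_left_lt (mem_univ _) (mem_univ _) hmem (hx_neg.trans_le hy_nonneg)
  rw [hψ_log hz, sub_pos] at hz_pos
  exact (Real.log_lt_log_iff (by positivity) (by positivity)).1 hz_pos

theorem hasDerivAt_affine_rpow_sub_mul_rpow {A B C p q v : ℝ} (hv : v ≠ 0) (hABv : A + B * v ≠ 0) :
    HasDerivAt (fun v ↦ (A + B * v) ^ p - C * v ^ q)
      (B * p * (A + B * v) ^ (p - 1) - C * (q * v ^ (q - 1))) v := by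
  have haffine : HasDerivAt (fun v ↦ A + B * v) B v := by
    simpa using ((hasDerivAt_id v).const_mul B).const_add A
  exact (haffine.rpow_const (Or.inl hABv)).sub
    ((Real.hasDerivAt_rpow_const (Or.inl hv)).const_mul C)

theorem sq_rpow_div_two {x : ℝ} (hx : 0 ≤ x) (r : ℝ) : (x ^ 2) ^ (r / 2) = x ^ r := by
  rw [Real.rpow_div_two_eq_sqrt r (sq_nonneg x), Real.sqrt_sq hx]

theorem self_mul_rpow_sub_one {x r : ℝ} (hx : 0 ≤ x) (hr : r ≠ 0) : x * x ^ (r - 1) = x ^ r := by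
  rw [← Real.rpow_one_add' hx (by simpa), add_sub_cancel]

theorem rpow_div_two_eq_rpow_mul_self {s : ℝ} (hs : 0 < s) (r : ℝ) :
    s ^ (r / 2) = s ^ ((r - 2) / 2) * s := by
  rw [← Real.rpow_add_one hs.ne']
  ring_nf

section BernoulliType

variable {m κ : ℝ}

theorem one_sub_add_mul_rpow_lt_affine_rpow (hm : 2 ≤ m) (hκ : 0 < κ) (hκm : (m - 1) * κ < 1)
    (hcrit : 1 - m * κ < (1 - (m - 1) * κ) ^ (m / 2)) {v : ℝ} (hv : 0 ≤ v) (hv1 : v ≠ 1) :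
    1 - m * κ + m * κ * v ^ ((m - 1) / 2) < (1 - (m - 1) * κ + (m - 1) * κ * v) ^ (m / 2) := by
  have hm1 : 0 < m - 1 := by linarith
  have hA : 0 < 1 - (m - 1) * κ := sub_pos.2 hκm
  have hB : 0 ≤ (m - 1) * κ := by positivity
  set f : ℝ → ℝ := fun v ↦
    (1 - (m - 1) * κ + (m - 1) * κ * v) ^ (m / 2) - m * κ * v ^ ((m - 1) / 2) with hf
  have hcont : Continuous f := by
    have := Real.continuous_rpow_const (q := m / 2) (by positivity)
    have := Real.continuous_rpow_const (q := (m - 1) / 2) (by positivity)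
    fun_prop
  have hf_zero : f 0 = (1 - (m - 1) * κ) ^ (m / 2) := by
    simp [hf, Real.zero_rpow (x := (m - 1) / 2) (by positivity)]
  have hf_one : f 1 = 1 - m * κ := by simp [hf]
  have hderiv (y : ℝ) (hy : 0 < y) : HasDerivAt f (m * (m - 1) * κ / 2 *
      ((1 - (m - 1) * κ + (m - 1) * κ * y) ^ (m / 2 - 1) - y ^ ((m - 1) / 2 - 1))) y :=
    (hasDerivAt_affine_rpow_sub_mul_rpow hy.ne' (by positivity)).congr_deriv (by ring)
  have hK : 0 < m * (m - 1) * κ / 2 := by positivity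
  have hlt : f 1 < f v := by
    refine lt_of_hasDerivAt_of_single_crossing (a := 0) hcont.continuousOn hderiv ?_ one_pos
      (by simp) (by rwa [hf_zero, hf_one]) hv hv1
    intro p q r hp hpq hqr hp_neg hq_nonneg
    have hp_lt := sub_neg.1 (neg_of_mul_neg_right hp_neg hK.le)
    have hq_le := sub_nonneg.1 (nonneg_of_mul_nonneg_right hq_nonneg hK)
    exact mul_pos hK (sub_pos.2
      (rpow_lt_affine_rpow_of_crossing hA hB (by linarith) hp hpq hqr hp_lt hq_le))
  exact lt_sub_iff_add_lt.1 (hf_one ▸ hlt)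

theorem rpow_add_mul_rpow_lt_weighted_sq_rpow (hm : 2 ≤ m) (hκ : 0 < κ)
    (hκm : (m - 1) * κ < 1) (hcrit : 1 - m * κ < (1 - (m - 1) * κ) ^ (m / 2)) {x y : ℝ}
    (hx : 0 ≤ x) (hy : 0 ≤ y) (hxy : x ≠ y) :
    (1 - m * κ) * x ^ m + m * κ * x * y ^ (m - 1) <
      ((1 - (m - 1) * κ) * x ^ 2 + (m - 1) * κ * y ^ 2) ^ (m / 2) := by
  have hm1 : 0 < m - 1 := by linarith
  rcases hx.eq_or_lt with rfl | hx
  · have hpos : 0 < ((m - 1) * κ * y ^ 2) ^ (m / 2) := by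
      have := hy.lt_of_ne hxy
      positivity
    simpa [Real.zero_rpow (x := m) (by positivity)] using hpos
  have hA : 0 < 1 - (m - 1) * κ := sub_pos.2 hκm
  have hne : (y / x) ^ 2 ≠ 1 := by
    rw [Ne, pow_eq_one_iff_of_nonneg (by positivity) two_ne_zero, div_eq_one_iff_eq hx.ne']
    exact hxy.symm
  have hbernoulli := one_sub_add_mul_rpow_lt_affine_rpow hm hκ hκm hcrit (sq_nonneg (y / x)) hne
  have hpow : x ^ m * (y / x) ^ (m - 1) = x * y ^ (m - 1) := by
    rw [← self_mul_rpow_sub_one hx.le (by positivity), Real.div_rpow hy hx.le]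
    field_simp
  calc (1 - m * κ) * x ^ m + m * κ * x * y ^ (m - 1)
      = x ^ m * (1 - m * κ + m * κ * ((y / x) ^ 2) ^ ((m - 1) / 2)) := by
        rw [sq_rpow_div_two (by positivity)]
        linear_combination -(m * κ) * hpow
    _ < x ^ m * (1 - (m - 1) * κ + (m - 1) * κ * (y / x) ^ 2) ^ (m / 2) := by gcongr
    _ = ((1 - (m - 1) * κ) * x ^ 2 + (m - 1) * κ * y ^ 2) ^ (m / 2) := by
        rw [← sq_rpow_div_two hx.le, ← Real.mul_rpow (by positivity) (by positivity)]
        congr 1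
        field_simp

theorem weighted_sq_rpow_self (hm : m ≠ 0) {x : ℝ} (hx : 0 ≤ x) :
    ((1 - (m - 1) * κ) * x ^ 2 + (m - 1) * κ * x ^ 2) ^ (m / 2) =
      (1 - m * κ) * x ^ m + m * κ * x * x ^ (m - 1) := by
  rw [← add_mul, sub_add_cancel, one_mul, sq_rpow_div_two hx]
  linear_combination -(m * κ) * self_mul_rpow_sub_one hx hm

end BernoulliType

section Rescaling

variable {m α : ℝ}

theorem one_sub_mul_inv_eq (hS : α ^ 2 + m - 1 ≠ 0) :
    1 - m * (α ^ 2 + m - 1)⁻¹ = (α ^ 2 - 1) / (α ^ 2 + m - 1) := by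
  field_simp
  ring

theorem one_sub_sub_one_mul_inv_eq (hS : α ^ 2 + m - 1 ≠ 0) :
    1 - (m - 1) * (α ^ 2 + m - 1)⁻¹ = α ^ 2 / (α ^ 2 + m - 1) := by
  field_simp
  ring

theorem one_sub_mul_inv_lt_rpow_of_subcritical (hS : 0 < α ^ 2 + m - 1) (hα : 0 < α)
    (hcrit : (α ^ 2 + m - 1) ^ ((m - 2) / 2) * (α ^ 2 - 1) < α ^ m) :
    1 - m * (α ^ 2 + m - 1)⁻¹ < (1 - (m - 1) * (α ^ 2 + m - 1)⁻¹) ^ (m / 2) := by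
  rw [one_sub_mul_inv_eq hS.ne', one_sub_sub_one_mul_inv_eq hS.ne',
    Real.div_rpow (by positivity) hS.le, sq_rpow_div_two hα.le, lt_div_iff₀ (by positivity),
    rpow_div_two_eq_rpow_mul_self hS m]
  calc (α ^ 2 - 1) / (α ^ 2 + m - 1) * ((α ^ 2 + m - 1) ^ ((m - 2) / 2) * (α ^ 2 + m - 1))
      = (α ^ 2 + m - 1) ^ ((m - 2) / 2) * (α ^ 2 - 1) := by field_simp
    _ < α ^ m := hcrit

theorem sq_add_mul_sq_rpow_eq_weighted_sq_rpow {X Y : ℝ} (hm : 1 ≤ m) (hα : α ≠ 0) :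
    (X ^ 2 + (m - 1) * Y ^ 2) ^ (m / 2) = (α ^ 2 + m - 1) ^ (m / 2) *
      ((1 - (m - 1) * (α ^ 2 + m - 1)⁻¹) * (X / α) ^ 2 +
        (m - 1) * (α ^ 2 + m - 1)⁻¹ * Y ^ 2) ^ (m / 2) := by
  have := sub_nonneg.2 hm
  have hS : 0 < α ^ 2 + m - 1 := by linarith [pow_pos (abs_pos.2 hα) 2, sq_abs α]
  rw [one_sub_sub_one_mul_inv_eq hS.ne', ← Real.mul_rpow hS.le (by positivity)]
  congr 1
  field_simp

theorem rpow_add_mul_rpow_eq_rescaled {X Y : ℝ} (hS : 0 < α ^ 2 + m - 1) (hα : 0 < α)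
    (hX : 0 ≤ X) :
    (α ^ 2 + m - 1) ^ ((m - 2) / 2) * (α ^ 2 - 1) / α ^ m * X ^ m +
        m * (α ^ 2 + m - 1) ^ ((m - 2) / 2) / α * X * Y ^ (m - 1) =
      (α ^ 2 + m - 1) ^ (m / 2) * ((1 - m * (α ^ 2 + m - 1)⁻¹) * (X / α) ^ m +
        m * (α ^ 2 + m - 1)⁻¹ * (X / α) * Y ^ (m - 1)) := by
  rw [one_sub_mul_inv_eq hS.ne', Real.div_rpow hX hα.le, rpow_div_two_eq_rpow_mul_self hS m]
  field_simp

end Rescaling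

theorem stmt1_general (m : ℝ) (hm : 2 ≤ m) (α : ℝ) (hα : 0 < α)
    (hcrit : (α ^ 2 + m - 1) ^ ((m - 2) / 2) * (α ^ 2 - 1) < α ^ m)
    (a b : ℝ)
    (ha : a = (α ^ 2 + m - 1) ^ ((m - 2) / 2) * (α ^ 2 - 1) / α ^ m)
    (hb : b = m * (α ^ 2 + m - 1) ^ ((m - 2) / 2) / α) :
    a < 1 ∧
    ∀ X Y : ℝ, 0 ≤ X → 0 ≤ Y →
      ((X ^ 2 + (m - 1) * Y ^ 2) ^ (m / 2) ≥ a * X ^ m + b * X * Y ^ (m - 1)) ∧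
      ((X ^ 2 + (m - 1) * Y ^ 2) ^ (m / 2) = a * X ^ m + b * X * Y ^ (m - 1) ↔
        X = α * Y) := by
  have hS : 0 < α ^ 2 + m - 1 := by linarith [sq_nonneg α]
  have hκm : (m - 1) * (α ^ 2 + m - 1)⁻¹ < 1 := by
    rw [← div_eq_mul_inv, div_lt_one hS]
    linarith [pow_pos hα 2]
  subst ha hb
  refine ⟨(div_lt_one (by positivity)).2 hcrit, fun X Y hX hY ↦ ?_⟩
  rw [sq_add_mul_sq_rpow_eq_weighted_sq_rpow (by linarith) hα.ne',
    rpow_add_mul_rpow_eq_rescaled hS hα hX, mul_comm α Y, ← div_eq_iff hα.ne']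
  rcases eq_or_ne (X / α) Y with rfl | hne
  · have heq := weighted_sq_rpow_self (κ := (α ^ 2 + m - 1)⁻¹) (by positivity : m ≠ 0) hY
    rw [heq]
    exact ⟨le_rfl, iff_of_true rfl rfl⟩
  · have hlt := mul_lt_mul_of_pos_left (rpow_add_mul_rpow_lt_weighted_sq_rpow hm (inv_pos.2 hS) hκm
      (one_sub_mul_inv_lt_rpow_of_subcritical hS hα hcrit) (div_nonneg hX hα.le) hY hne)
      (Real.rpow_pos_of_pos hS (m / 2))
    exact ⟨hlt.le, iff_of_false hlt.ne' hne⟩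

/-- Lemma 10.1.
Let `n ≥ 2`, `α ≥ 1` with `(α² + n - 1)^((n-2)/2) (α² - 1) < α^n`.  With
`a = (α² + n - 1)^((n-2)/2) (α² - 1) / α^n` and
`b = n (α² + n - 1)^((n-2)/2) / α`, we have `a < 1` and for all `X, Y ≥ 0`,
`(X² + (n-1)Y²)^(n/2) ≥ a X^n + b X Y^(n-1)`, with equality iff `X = α Y`. -/
theorem stmt1 (n : ℕ) (hn : 2 ≤ n) (α : ℝ) (hα : 1 ≤ α)
    (hcrit : (α ^ 2 + (n : ℝ) - 1) ^ (((n : ℝ) - 2) / 2) * (α ^ 2 - 1) < α ^ (n : ℝ))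
    (a b : ℝ)
    (ha : a = (α ^ 2 + (n : ℝ) - 1) ^ (((n : ℝ) - 2) / 2) * (α ^ 2 - 1) / α ^ (n : ℝ))
    (hb : b = (n : ℝ) * (α ^ 2 + (n : ℝ) - 1) ^ (((n : ℝ) - 2) / 2) / α) :
    a < 1 ∧
    ∀ X Y : ℝ, 0 ≤ X → 0 ≤ Y →
      ((X ^ 2 + ((n : ℝ) - 1) * Y ^ 2) ^ ((n : ℝ) / 2) ≥
          a * X ^ (n : ℝ) + b * X * Y ^ ((n : ℝ) - 1)) ∧
      ((X ^ 2 + ((n : ℝ) - 1) * Y ^ 2) ^ ((n : ℝ) / 2) =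
          a * X ^ (n : ℝ) + b * X * Y ^ ((n : ℝ) - 1) ↔ X = α * Y) :=
  stmt1_general n (by exact_mod_cast hn) α (one_pos.trans_le hα) hcrit a b ha hb
end

section
/- Let n ≥ 2 be an integer and let 0 ≤ α ≤ 1 be a real number. Set a = (n−1)(α² + n − 1)^{(n−2)/2}(1 − α²) and b = n·α·(α² + n − 1)^{(n−2)/2}. Then for all real X, Y ≥ 0 one has (X² + (n−1)Y²)^{n/2} ≥ a·Y^n + b·X·Y^{n−1}, with equality if and only if X = α·Y. -/
/-!
By convexity, `t ↦ t ^ q` lies above its tangent line at `C = (α² + m) Y²`. Evaluating at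
`t = X² + m Y²`, whose excess over `C` is `X² - (α Y)² = 2 α Y (X - α Y) + (X - α Y)²`, gives the
tangent line of `X ↦ (X² + m Y²) ^ q` at `X = α Y` plus a nonnegative multiple of `(X - α Y)²`.
This square forces `X = α Y` in the equality case. The theorem is the case `m = n - 1`, `q = n / 2`.
-/

theorem tangent_le_rpow {c u q : ℝ} (hc : 0 ≤ c) (hu : 0 ≤ u) (hq : 1 ≤ q) :
    c ^ q + q * c ^ (q - 1) * (u - c) ≤ u ^ q := by
  rcases hc.eq_or_lt with rfl | hc
  · rcases hq.eq_or_lt with rfl | hq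
    · simp
    · rw [Real.zero_rpow (by linarith), Real.zero_rpow (by linarith)]
      simpa using Real.rpow_nonneg hu q
  · have bernoulli : 1 + q * (u / c - 1) ≤ (u / c) ^ q := by
      simpa using one_add_mul_self_le_rpow_one_add (s := u / c - 1)
        (by linarith [div_nonneg hu hc.le]) hq
    calc c ^ q + q * c ^ (q - 1) * (u - c) = (1 + q * (u / c - 1)) * c ^ q := by
          rw [Real.rpow_sub_one hc.ne']
          field_simp
      _ ≤ (u / c) ^ q * c ^ q := by gcongr
      _ = u ^ q := by
          rw [← Real.mul_rpow (by positivity) hc.le, div_mul_cancel₀ u hc.ne']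

/-- The tangent line of `X ↦ (X² + m Y²) ^ q` at `X = α Y`, written for `Y ≥ 0` as a form that is
homogeneous of degree `2 q` in `(X, Y)`. -/
noncomputable def tangentLine (m q α X Y : ℝ) : ℝ :=
  (α ^ 2 + m) ^ (q - 1) *
    ((m + (1 - 2 * q) * α ^ 2) * Y ^ (2 * q) + 2 * q * α * X * Y ^ (2 * q - 1))

section TangentLine

variable {m q Y : ℝ}

theorem tangentLine_add_sq_eq (hm : 0 ≤ m) (hq : 1 / 2 < q) (α X : ℝ) (hY : 0 ≤ Y) :
    tangentLine m q α X Y + q * (α ^ 2 + m) ^ (q - 1) * Y ^ (2 * q - 2) * (X - α * Y) ^ 2 =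
      ((α ^ 2 + m) * Y ^ 2) ^ q +
        q * ((α ^ 2 + m) * Y ^ 2) ^ (q - 1) * (X ^ 2 + m * Y ^ 2 - (α ^ 2 + m) * Y ^ 2) := by
  have rpow_two_mul : Y ^ (2 * q) = Y ^ (2 * q - 2) * Y ^ 2 := by
    rw [← Real.rpow_two, ← Real.rpow_add' hY (by linarith), sub_add_cancel]
  have rpow_two_mul_sub_one : Y ^ (2 * q - 1) = Y ^ (2 * q - 2) * Y := by
    rw [← Real.rpow_add_one' hY (by linarith)]
    ring_nf
  have center_rpow_sub_one :
      ((α ^ 2 + m) * Y ^ 2) ^ (q - 1) = (α ^ 2 + m) ^ (q - 1) * Y ^ (2 * q - 2) := by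
    rw [Real.mul_rpow (by positivity) (by positivity), ← Real.rpow_two Y, ← Real.rpow_mul hY]
    ring_nf
  have center_rpow : ((α ^ 2 + m) * Y ^ 2) ^ q =
      ((α ^ 2 + m) * Y ^ 2) ^ (q - 1) * ((α ^ 2 + m) * Y ^ 2) := by
    rw [← Real.rpow_add_one' (by positivity) (by linarith), sub_add_cancel]
  rw [tangentLine, center_rpow, center_rpow_sub_one, rpow_two_mul, rpow_two_mul_sub_one]
  ring

theorem tangentLine_add_sq_le (hm : 0 ≤ m) (hq : 1 ≤ q) (α X : ℝ) (hY : 0 ≤ Y) :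
    tangentLine m q α X Y + q * (α ^ 2 + m) ^ (q - 1) * Y ^ (2 * q - 2) * (X - α * Y) ^ 2 ≤
      (X ^ 2 + m * Y ^ 2) ^ q := by
  rw [tangentLine_add_sq_eq hm (by linarith) α X hY]
  exact tangent_le_rpow (by positivity) (by positivity) hq

theorem tangentLine_le (hm : 0 ≤ m) (hq : 1 ≤ q) (α X : ℝ) (hY : 0 ≤ Y) :
    tangentLine m q α X Y ≤ (X ^ 2 + m * Y ^ 2) ^ q :=
  (le_add_of_nonneg_right (by positivity)).trans (tangentLine_add_sq_le hm hq α X hY)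

theorem tangentLine_mul_self (hm : 0 ≤ m) (hq : 1 / 2 < q) (α : ℝ) (hY : 0 ≤ Y) :
    tangentLine m q α (α * Y) Y = ((α * Y) ^ 2 + m * Y ^ 2) ^ q := by
  have center_eq : (α * Y) ^ 2 + m * Y ^ 2 = (α ^ 2 + m) * Y ^ 2 := by ring
  simpa [center_eq] using tangentLine_add_sq_eq hm hq α (α * Y) hY

theorem rpow_eq_tangentLine_iff (hm : 0 < m) (hq : 1 ≤ q) (α X : ℝ) (hY : 0 ≤ Y) :
    (X ^ 2 + m * Y ^ 2) ^ q = tangentLine m q α X Y ↔ X = α * Y := by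
  refine ⟨fun h => ?_, ?_⟩
  · rcases hY.eq_or_lt with rfl | hY
    · have hX : (X ^ 2) ^ q = 0 := by
        simpa [tangentLine, Real.zero_rpow (show 2 * q ≠ 0 by linarith),
          Real.zero_rpow (show 2 * q - 1 ≠ 0 by linarith)] using h
      simpa using (Real.rpow_eq_zero (sq_nonneg X) (by linarith)).mp hX
    · have coeff_pos : 0 < q * (α ^ 2 + m) ^ (q - 1) * Y ^ (2 * q - 2) := by positivity
      have remainder_nonpos :
          q * (α ^ 2 + m) ^ (q - 1) * Y ^ (2 * q - 2) * (X - α * Y) ^ 2 ≤ 0 := by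
        linarith [tangentLine_add_sq_le hm.le hq α X hY.le]
      have sq_nonpos : (X - α * Y) ^ 2 ≤ 0 := nonpos_of_mul_nonpos_right remainder_nonpos coeff_pos
      exact sub_eq_zero.mp (pow_eq_zero_iff two_ne_zero |>.mp (sq_nonpos.antisymm (sq_nonneg _)))
  · rintro rfl
    exact (tangentLine_mul_self hm.le (by linarith) α hY).symm

end TangentLine

theorem stmt2_general {p : ℝ} (hp : 2 ≤ p) {α a b : ℝ}
    (ha : a = (p - 1) * (α ^ 2 + p - 1) ^ ((p - 2) / 2) * (1 - α ^ 2))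
    (hb : b = p * α * (α ^ 2 + p - 1) ^ ((p - 2) / 2)) (X : ℝ) {Y : ℝ} (hY : 0 ≤ Y) :
    (X ^ 2 + (p - 1) * Y ^ 2) ^ (p / 2) ≥ a * Y ^ p + b * X * Y ^ (p - 1) ∧
      ((X ^ 2 + (p - 1) * Y ^ 2) ^ (p / 2) = a * Y ^ p + b * X * Y ^ (p - 1) ↔ X = α * Y) := by
  have tangentLine_eq : a * Y ^ p + b * X * Y ^ (p - 1) = tangentLine (p - 1) (p / 2) α X Y := by
    rw [tangentLine, ha, hb, show 2 * (p / 2) = p by ring, show p / 2 - 1 = (p - 2) / 2 by ring,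
      show α ^ 2 + (p - 1) = α ^ 2 + p - 1 by ring]
    ring
  rw [tangentLine_eq]
  exact ⟨tangentLine_le (by linarith) (by linarith) α X hY,
    rpow_eq_tangentLine_iff (by linarith) (by linarith) α X hY⟩

/-- Lemma 10.2.
Let `n ≥ 2` and `0 ≤ α ≤ 1`.  With
`a = (n-1)(α² + n - 1)^((n-2)/2)(1 - α²)` and `b = n α (α² + n - 1)^((n-2)/2)`,
for all `X, Y ≥ 0` one has `(X² + (n-1)Y²)^(n/2) ≥ a Y^n + b X Y^(n-1)`,
with equality iff `X = α Y`. -/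
theorem stmt2 (n : ℕ) (hn : 2 ≤ n) (α : ℝ) (hα0 : 0 ≤ α) (hα1 : α ≤ 1)
    (a b : ℝ)
    (ha : a = ((n : ℝ) - 1) * (α ^ 2 + (n : ℝ) - 1) ^ (((n : ℝ) - 2) / 2) * (1 - α ^ 2))
    (hb : b = (n : ℝ) * α * (α ^ 2 + (n : ℝ) - 1) ^ (((n : ℝ) - 2) / 2)) :
    ∀ X Y : ℝ, 0 ≤ X → 0 ≤ Y →
      ((X ^ 2 + ((n : ℝ) - 1) * Y ^ 2) ^ ((n : ℝ) / 2) ≥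
          a * Y ^ (n : ℝ) + b * X * Y ^ ((n : ℝ) - 1)) ∧
      ((X ^ 2 + ((n : ℝ) - 1) * Y ^ 2) ^ ((n : ℝ) / 2) =
          a * Y ^ (n : ℝ) + b * X * Y ^ ((n : ℝ) - 1) ↔ X = α * Y) := by
  exact fun X Y _ hY => stmt2_general (by exact_mod_cast hn) ha hb X hY
end

section
/- For every integer n ≥ 4 there exists a real number α with 1 < α < √((n−1)/(n−3)) such that (α² + n − 1)^{(n−2)/2} (α² − 1) = α^n. -/
/-!
At `α = 1` the left side of the equation vanishes and the right side is `1`. At the upper endpoint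
`α² = (p - 1) / (p - 3)` one has `α² + p - 1 = α² (p - 2)`, so the left side exceeds the right side
exactly when `(m + 1) / 2 < m ^ (m / 2)` with `m = p - 2`. Since `m log m ≥ m - 1`, this follows
from `exp ((m - 1) / 2) > (m + 1) / 2`. The intermediate value theorem then gives `α`, for every
real exponent `p > 3`.
-/

/-- The left side minus the right side of the equation for the critical constant of the upper
Nitsche bound, so that `α` solves the equation iff `nitscheDefect p α = 0`. The dimension is
replaced by a real exponent `p`. -/
noncomputable def nitscheDefect (p α : ℝ) : ℝ :=
  (α ^ 2 + p - 1) ^ ((p - 2) / 2) * (α ^ 2 - 1) - α ^ p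

theorem add_one_div_two_lt_self_rpow_div_two {m : ℝ} (hm : 0 < m) (hm1 : m ≠ 1) :
    (m + 1) / 2 < m ^ (m / 2) := by
  have sub_one_le_log_mul : m - 1 ≤ Real.log m * m := by
    have h := mul_le_mul_of_nonneg_right (Real.one_sub_inv_le_log_of_pos hm) hm.le
    rwa [sub_mul, one_mul, inv_mul_cancel₀ hm.ne'] at h
  calc (m + 1) / 2 = (m - 1) / 2 + 1 := by ring
    _ < Real.exp ((m - 1) / 2) :=
      Real.add_one_lt_exp (div_ne_zero (sub_ne_zero.mpr hm1) two_ne_zero)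
    _ ≤ Real.exp (Real.log m * (m / 2)) := Real.exp_le_exp.mpr (by linarith)
    _ = m ^ (m / 2) := (Real.rpow_def_of_pos hm _).symm

theorem continuous_nitscheDefect {p : ℝ} (hp : 2 ≤ p) : Continuous (nitscheDefect p) := by
  have base_continuous : Continuous fun α : ℝ ↦ (α ^ 2 + p - 1) ^ ((p - 2) / 2) :=
    Continuous.rpow_const (by fun_prop) fun _ ↦ Or.inr (by linarith)
  have rpow_continuous : Continuous fun α : ℝ ↦ α ^ p :=
    Real.continuous_rpow_const (by linarith)
  exact (base_continuous.mul (by fun_prop)).sub rpow_continuous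

theorem nitscheDefect_one (p : ℝ) : nitscheDefect p 1 = -1 := by
  simp [nitscheDefect]

theorem nitscheDefect_sqrt {p s : ℝ} (hp : 1 ≤ p) (hs : 0 < s) :
    nitscheDefect p (√s) =
      s ^ ((p - 2) / 2) * ((1 + (p - 1) / s) ^ ((p - 2) / 2) * (s - 1) - s) := by
  have base_eq : s + p - 1 = s * (1 + (p - 1) / s) := by field_simp; ring
  have base_nonneg : 0 ≤ 1 + (p - 1) / s :=
    add_nonneg zero_le_one (div_nonneg (sub_nonneg.mpr hp) hs.le)
  have sqrt_rpow : √s ^ p = s ^ ((p - 2) / 2) * s := by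
    rw [Real.sqrt_eq_rpow, ← Real.rpow_mul hs.le, ← Real.rpow_add_one hs.ne']
    ring_nf
  rw [nitscheDefect, Real.sq_sqrt hs.le, sqrt_rpow, base_eq, Real.mul_rpow hs.le base_nonneg]
  ring

theorem nitscheDefect_sqrt_div_pos {p : ℝ} (hp : 3 < p) :
    0 < nitscheDefect p √((p - 1) / (p - 3)) := by
  have sub_one_pos : 0 < p - 1 := by linarith
  have sub_three_pos : 0 < p - 3 := by linarith
  have endpoint_pos : 0 < (p - 1) / (p - 3) := div_pos sub_one_pos sub_three_pos
  have base_eq : 1 + (p - 1) / ((p - 1) / (p - 3)) = p - 2 := by field_simp; ring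
  have rpow_gt : (p - 1) / 2 < (p - 2) ^ ((p - 2) / 2) := by
    convert add_one_div_two_lt_self_rpow_div_two (m := p - 2) (by linarith) (by linarith) using 2
    ring
  rw [nitscheDefect_sqrt (by linarith) endpoint_pos, base_eq]
  refine mul_pos (Real.rpow_pos_of_pos endpoint_pos _) (sub_pos.mpr ?_)
  calc (p - 1) / (p - 3) = (p - 1) / 2 * ((p - 1) / (p - 3) - 1) := by field_simp; ring
    _ < (p - 2) ^ ((p - 2) / 2) * ((p - 1) / (p - 3) - 1) := by
      refine mul_lt_mul_of_pos_right rpow_gt (sub_pos.mpr ?_)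
      exact (one_lt_div sub_three_pos).mpr (by linarith)

theorem stmt3_general {p : ℝ} (hp : 3 < p) :
    ∃ α : ℝ, 1 < α ∧ α < √((p - 1) / (p - 3)) ∧
      (α ^ 2 + p - 1) ^ ((p - 2) / 2) * (α ^ 2 - 1) = α ^ p := by
  have one_le_endpoint : 1 ≤ √((p - 1) / (p - 3)) :=
    Real.one_le_sqrt.mpr ((one_le_div (by linarith)).mpr (by linarith))
  have defect_one_neg : nitscheDefect p 1 < 0 := by rw [nitscheDefect_one]; exact neg_one_lt_zero
  obtain ⟨α, ⟨one_lt, lt_endpoint⟩, defect_eq_zero⟩ :=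
    intermediate_value_Ioo one_le_endpoint (continuous_nitscheDefect (by linarith)).continuousOn
      ⟨defect_one_neg, nitscheDefect_sqrt_div_pos hp⟩
  exact ⟨α, one_lt, lt_endpoint, sub_eq_zero.mp defect_eq_zero⟩

/-- For every integer `n ≥ 4` there exists `α` with `1 < α < √((n-1)/(n-3))`
satisfying `(α² + n - 1)^((n-2)/2) (α² - 1) = α^n`. -/
theorem stmt3 (n : ℕ) (hn : 4 ≤ n) :
    ∃ α : ℝ, 1 < α ∧ α < Real.sqrt (((n : ℝ) - 1) / ((n : ℝ) - 3)) ∧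
      (α ^ 2 + (n : ℝ) - 1) ^ (((n : ℝ) - 2) / 2) * (α ^ 2 - 1) = α ^ (n : ℝ) := by
  exact stmt3_general (by exact_mod_cast hn)
end

section
/- Let n ≥ 2 be an integer, let H : ℝ → ℝ, let x₀ ∈ ℝⁿ with t₀ = |x₀| > 0, and suppose H is differentiable at t₀. Then the radial stretching h : ℝⁿ ∖ {0} → ℝⁿ, h(x) = H(|x|)·x/|x|, is differentiable at x₀ with differential Dh(x₀) = (H(t₀)/t₀)·I + ((t₀·H'(t₀) − H(t₀))/t₀³)·(x₀ ⊗ x₀). Consequently ‖Dh(x₀)‖² = H'(t₀)² + (n−1)·H(t₀)²/t₀² (square of the Hilbert–Schmidt norm), and det Dh(x₀) = H'(t₀)·(H(t₀)/t₀)^{n−1}. -/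
/-!
The product rule gives `Dh(x₀) = a·I + c·(x₀ ⊗ x₀)`. Such a map is multiplication by `a + c·t₀²` on
the line through `x₀` and by `a` on its orthogonal complement, so its determinant is the product of
these `n` eigenvalues and, the map being symmetric, its squared Hilbert–Schmidt norm is the sum of
their squares. Here `a = H(t₀)/t₀`, and `c` is such that `a + c·t₀² = H'(t₀)`.
-/

section RankOne

open Polynomial

variable {R M : Type*} [CommRing R] [AddCommGroup M] [Module R M] [Module.Free R M]
  [Module.Finite R M]

theorem charpoly_smulRight (f : M →ₗ[R] R) (v : M) :
    (f.smulRight v).charpoly =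
      X ^ Module.finrank R M - f v • X ^ (Module.finrank R M - 1) := by
  nontriviality R
  let b := Module.Free.chooseBasis R M
  have toMatrix_eq : LinearMap.toMatrix b b (f.smulRight v) =
      Matrix.vecMulVec (b.repr v) (fun i ↦ f (b i)) := by
    ext i j
    simp [LinearMap.toMatrix_apply, Matrix.vecMulVec_apply, mul_comm]
  have dotProduct_eq : (b.repr v : _ → R) ⬝ᵥ (fun i ↦ f (b i)) = f v := by
    simp only [dotProduct, ← smul_eq_mul, ← map_smul, ← map_sum, b.sum_repr]
  rw [← LinearMap.charpoly_toMatrix _ b, toMatrix_eq, Matrix.charpoly_vecMulVec, dotProduct_eq,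
    Module.finrank_eq_card_basis b]

theorem det_smul_id_add_smulRight (a : R) (f : M →ₗ[R] R) (v : M) :
    LinearMap.det (a • LinearMap.id + f.smulRight v) =
      a ^ Module.finrank R M + f v * a ^ (Module.finrank R M - 1) := by
  have eq_sub : a • LinearMap.id + f.smulRight v =
      algebraMap R (Module.End R M) a - f.smulRight (-v) := by
    ext y
    simp
  rw [eq_sub, ← LinearMap.eval_charpoly, charpoly_smulRight]
  simp

end RankOne

section InnerProductSpace

variable {E : Type*} [NormedAddCommGroup E] [InnerProductSpace ℝ E]

theorem hasStrictFDerivAt_norm {x : E} (hx : x ≠ 0) :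
    HasStrictFDerivAt (fun y : E ↦ ‖y‖) (‖x‖⁻¹ • innerSL ℝ x) x := by
  have sqrt_norm_sq := (hasStrictFDerivAt_norm_sq x).sqrt (by positivity)
  simp only [Real.sqrt_sq (norm_nonneg _)] at sqrt_norm_sq
  refine sqrt_norm_sq.congr_fderiv ?_
  ext y
  simp only [one_div, mul_inv_rev, smul_apply, coe_innerSL_apply, nsmul_eq_mul, Nat.cast_ofNat,
    smul_eq_mul]
  field_simp

theorem hasFDerivAt_comp_norm_smul {g : ℝ → ℝ} {g' : ℝ} {x : E} (hx : x ≠ 0)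
    (hg : HasDerivAt g g' ‖x‖) :
    HasFDerivAt (fun y : E ↦ g ‖y‖ • y)
      (g ‖x‖ • ContinuousLinearMap.id ℝ E + (g' / ‖x‖) • (innerSL ℝ x).smulRight x) x := by
  have factor := hg.comp_hasFDerivAt x (hasStrictFDerivAt_norm hx).hasFDerivAt
  refine (factor.smul (hasFDerivAt_id x)).congr_fderiv ?_
  ext y
  simp [smul_smul, div_eq_mul_inv, mul_assoc]

theorem hasFDerivAt_radialStretching {H : ℝ → ℝ} {H' : ℝ} {x : E} (hx : x ≠ 0)
    (hH : HasDerivAt H H' ‖x‖) :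
    HasFDerivAt (fun y : E ↦ (H ‖y‖ / ‖y‖) • y)
      ((H ‖x‖ / ‖x‖) • ContinuousLinearMap.id ℝ E +
        ((‖x‖ * H' - H ‖x‖) / ‖x‖ ^ 3) • (innerSL ℝ x).smulRight x) x := by
  have norm_ne_zero : ‖x‖ ≠ 0 := norm_ne_zero_iff.2 hx
  have quotient := hH.div (hasDerivAt_id ‖x‖) norm_ne_zero
  convert! hasFDerivAt_comp_norm_smul hx quotient using 3
  simp only [id]
  field_simp

theorem sum_norm_sq_smul_id_add_smulRight {ι : Type*} [Fintype ι] (b : OrthonormalBasis ι ℝ E)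
    (a : ℝ) (u v : E) :
    ∑ i, ‖(a • ContinuousLinearMap.id ℝ E + (innerSL ℝ u).smulRight v) (b i)‖ ^ 2 =
      Fintype.card ι * a ^ 2 + 2 * a * inner ℝ u v + ‖u‖ ^ 2 * ‖v‖ ^ 2 := by
  have norm_sq_apply (i : ι) :
      ‖(a • ContinuousLinearMap.id ℝ E + (innerSL ℝ u).smulRight v) (b i)‖ ^ 2 =
        a ^ 2 + 2 * a * (inner ℝ u (b i) * inner ℝ (b i) v) +
          inner ℝ u (b i) ^ 2 * ‖v‖ ^ 2 := by
    simp only [add_apply, smul_apply, ContinuousLinearMap.id_apply,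
      ContinuousLinearMap.smulRight_apply, coe_innerSL_apply, norm_add_sq_real, norm_smul,
      Real.norm_eq_abs, b.norm_eq_one, mul_one, sq_abs, inner_smul_right, real_inner_smul_left,
      mul_pow]
    ring
  simp only [norm_sq_apply, Finset.sum_add_distrib, ← Finset.mul_sum, ← Finset.sum_mul,
    b.sum_inner_mul_inner, b.sum_sq_inner_left]
  simp

theorem sum_norm_sq_smul_id_add_smul_smulRight_self {ι : Type*} [Fintype ι]
    (b : OrthonormalBasis ι ℝ E) (a c : ℝ) (x : E) :
    ∑ i, ‖(a • ContinuousLinearMap.id ℝ E + c • (innerSL ℝ x).smulRight x) (b i)‖ ^ 2 =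
      (a + c * ‖x‖ ^ 2) ^ 2 + ((Fintype.card ι : ℝ) - 1) * a ^ 2 := by
  have smul_smulRight : c • (innerSL ℝ x).smulRight x = (innerSL ℝ x).smulRight (c • x) := by
    ext y
    simp [smul_comm c]
  rw [smul_smulRight, sum_norm_sq_smul_id_add_smulRight, real_inner_smul_right,
    real_inner_self_eq_norm_sq, norm_smul, mul_pow, Real.norm_eq_abs, sq_abs]
  ring

theorem det_smul_id_add_smul_smulRight_self [FiniteDimensional ℝ E] [Nontrivial E]
    (a c : ℝ) (x : E) :
    (a • ContinuousLinearMap.id ℝ E + c • (innerSL ℝ x).smulRight x).det =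
      (a + c * ‖x‖ ^ 2) * a ^ (Module.finrank ℝ E - 1) := by
  have coe_eq :
      ((a • ContinuousLinearMap.id ℝ E + c • (innerSL ℝ x).smulRight x : E →L[ℝ] E) : E →ₗ[ℝ] E) =
        a • LinearMap.id + (innerSL ℝ x).toLinearMap.smulRight (c • x) := by
    ext y
    simp [smul_comm c]
  rw [ContinuousLinearMap.det, coe_eq, det_smul_id_add_smulRight,
    ← mul_pow_sub_one (Module.finrank_pos (R := ℝ) (M := E)).ne' a]
  simp only [ContinuousLinearMap.coe_coe, coe_innerSL_apply, real_inner_smul_right,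
    real_inner_self_eq_norm_sq]
  ring

theorem stmt12_general {ι : Type*} [Fintype ι] (b : OrthonormalBasis ι ℝ E) (H : ℝ → ℝ) (H' : ℝ)
    (x₀ : E) (hx₀ : x₀ ≠ 0) (hH : HasDerivAt H H' ‖x₀‖) :
    let t₀ : ℝ := ‖x₀‖
    let A : E →L[ℝ] E :=
      (H t₀ / t₀) • ContinuousLinearMap.id ℝ E +
        ((t₀ * H' - H t₀) / t₀ ^ 3) • ((innerSL ℝ x₀).smulRight x₀)
    HasFDerivAt (fun x : E ↦ (H ‖x‖ / ‖x‖) • x) A x₀ ∧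
    ∑ i, ‖A (b i)‖ ^ 2 = H' ^ 2 + ((Fintype.card ι : ℝ) - 1) * (H t₀) ^ 2 / t₀ ^ 2 ∧
    A.det = H' * (H t₀ / t₀) ^ (Fintype.card ι - 1) := by
  intro t₀ A
  have : FiniteDimensional ℝ E := b.toBasis.finiteDimensional_of_finite
  have : Nontrivial E := nontrivial_of_ne x₀ 0 hx₀
  have radial_eigenvalue : H t₀ / t₀ + (t₀ * H' - H t₀) / t₀ ^ 3 * ‖x₀‖ ^ 2 = H' := by
    have t₀_ne_zero : t₀ ≠ 0 := norm_ne_zero_iff.2 hx₀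
    change H t₀ / t₀ + (t₀ * H' - H t₀) / t₀ ^ 3 * t₀ ^ 2 = H'
    field_simp
    ring
  refine ⟨hasFDerivAt_radialStretching hx₀ hH, ?_, ?_⟩
  · rw [sum_norm_sq_smul_id_add_smul_smulRight_self, radial_eigenvalue, div_pow, mul_div_assoc]
  · rw [det_smul_id_add_smul_smulRight_self, radial_eigenvalue,
      Module.finrank_eq_card_basis b.toBasis]

end InnerProductSpace

/-- Differentiability of a radial stretching `h(x) = H(|x|)·x/|x|` at a point
`x₀ ≠ 0` where `H` is differentiable, with the explicit differential
`Dh(x₀) = (H(t₀)/t₀)·I + ((t₀H'(t₀) - H(t₀))/t₀³)·(x₀ ⊗ x₀)`, the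
Hilbert–Schmidt norm identity
`‖Dh(x₀)‖² = H'(t₀)² + (n-1)H(t₀)²/t₀²`, and
`det Dh(x₀) = H'(t₀)·(H(t₀)/t₀)^(n-1)`. -/
theorem stmt12 (n : ℕ) (hn : 2 ≤ n) (H : ℝ → ℝ) (H' : ℝ)
    (x₀ : EuclideanSpace ℝ (Fin n)) (hx₀ : x₀ ≠ 0)
    (hH : HasDerivAt H H' ‖x₀‖) :
    let t₀ : ℝ := ‖x₀‖
    let A : EuclideanSpace ℝ (Fin n) →L[ℝ] EuclideanSpace ℝ (Fin n) :=
      (H t₀ / t₀) • ContinuousLinearMap.id ℝ (EuclideanSpace ℝ (Fin n)) +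
        ((t₀ * H' - H t₀) / t₀ ^ 3) • ((innerSL ℝ x₀).smulRight x₀)
    HasFDerivAt (fun x : EuclideanSpace ℝ (Fin n) => (H ‖x‖ / ‖x‖) • x) A x₀ ∧
    ∑ i : Fin n, ‖A (EuclideanSpace.single i (1 : ℝ))‖ ^ 2 =
      H' ^ 2 + ((n : ℝ) - 1) * (H t₀) ^ 2 / t₀ ^ 2 ∧
    A.det = H' * (H t₀ / t₀) ^ (n - 1) := by
  simpa using stmt12_general (EuclideanSpace.basisFun (Fin n) ℝ) H H' x₀ hx₀ hH
end

section
/- Let n ≥ 2 be an integer, let (Ω, μ) be a probability measure space, and let X : Ω → [0, ∞) be a measurable function with ∫_Ω X dμ ≥ 1. Let α > 0 be a real number satisfying (α² + n − 1)^{(n−2)/2} (α² − 1) ≤ α^n. Then ∫_Ω ( α² + (n−1)·X^{2/(n−1)} )^{n/2} dμ ≥ (α² + n − 1)^{n/2}, with equality if and only if X = 1 μ-almost everywhere. -/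
open MeasureTheory

/-!
Write `E x = (α² + (n - 1) x ^ (2 / (n - 1))) ^ (n / 2)`. In the variable `u = x ^ (2 / (n - 1))`
the second derivative has the sign of `(n - 1) u - (n - 3) α²`, so `E` is strictly concave up to
some `b ≥ 0` and strictly convex afterwards. The condition on `α` says exactly that the tangent line
of `E` at `1` lies below `E` at `0`. A strictly concave function lies strictly below its tangents,
so this forces `b < 1`; the tangent then lies below `E` on `[b, ∞)` by convexity, and on `[0, b]` by
concavity, because it does so at both endpoints. Integrating the tangent inequality gives the bound.
Besides `x = 1` the tangent can only touch `E` at `x = 0`, so equality forces `X ≤ 1`, and the bound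
on the mean then gives `X = 1`.
-/

open Set
open scoped ENNReal

section TangentLine

variable {f : ℝ → ℝ} {S : Set ℝ} {l b p s x : ℝ}

theorem tangent_lt_of_strictConvexOn (hf : StrictConvexOn ℝ S f) (hp : p ∈ S) (hx : x ∈ S)
    (hxp : x ≠ p) (hd : HasDerivAt f s p) : f p + s * (x - p) < f x := by
  rcases lt_or_gt_of_ne hxp with hlt | hgt
  · have hslope := hf.slope_lt_of_hasDerivAt hx hp hlt hd
    rw [slope_def_field, div_lt_iff₀ (sub_pos.2 hlt)] at hslope
    linarith
  · have hslope := hf.lt_slope_of_hasDerivAt hp hx hgt hd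
    rw [slope_def_field, lt_div_iff₀ (sub_pos.2 hgt)] at hslope
    linarith

theorem lt_tangent_of_strictConcaveOn (hf : StrictConcaveOn ℝ S f) (hp : p ∈ S) (hx : x ∈ S)
    (hxp : x ≠ p) (hd : HasDerivAt f s p) : f x < f p + s * (x - p) := by
  have hneg := tangent_lt_of_strictConvexOn hf.neg hp hx hxp hd.neg
  simp only [Pi.neg_apply] at hneg
  linarith

theorem affine_lt_of_strictConcaveOn_Icc {c : ℝ} (hf : StrictConcaveOn ℝ (Icc l b) f)
    (hl : c + s * l ≤ f l) (hb : c + s * b ≤ f b) (hx : x ∈ Ioo l b) : c + s * x < f x := by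
  have hlb : l < b := hx.1.trans hx.2
  rw [← openSegment_eq_Ioo hlb] at hx
  obtain ⟨v, w, hv, hw, hvw, rfl⟩ := hx
  calc c + s * (v • l + w • b)
      = v * (c + s * l) + w * (c + s * b) := by
        simp only [smul_eq_mul]
        linear_combination -c * hvw
    _ ≤ v • f l + w • f b := by simp only [smul_eq_mul]; gcongr
    _ < f (v • l + w • b) :=
        hf.2 (left_mem_Icc.2 hlb.le) (right_mem_Icc.2 hlb.le) hlb.ne hv hw hvw

theorem tangent_lt_of_strictConcaveOn_of_strictConvexOn
    (hconc : StrictConcaveOn ℝ (Icc l b) f) (hconv : StrictConvexOn ℝ (Ici b) f)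
    (hd : HasDerivAt f s p) (hlp : l < p) (hl : f p + s * (l - p) ≤ f l)
    (hlx : l < x) (hxp : x ≠ p) : f p + s * (x - p) < f x := by
  have hbp : b < p := by
    by_contra! hpb
    exact hl.not_gt <| lt_tangent_of_strictConcaveOn hconc ⟨hlp.le, hpb⟩
      (left_mem_Icc.2 (hlp.le.trans hpb)) hlp.ne hd
  have tangent_lt_on_Ici : ∀ y, b ≤ y → y ≠ p → f p + s * (y - p) < f y := fun y hy hyp =>
    tangent_lt_of_strictConvexOn hconv hbp.le hy hyp hd
  rcases le_or_gt b x with hbx | hxb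
  · exact tangent_lt_on_Ici x hbx hxp
  · have hb := tangent_lt_on_Ici b le_rfl hbp.ne
    have := affine_lt_of_strictConcaveOn_Icc (c := f p - s * p) (s := s) hconc
      (by linarith) (by linarith) ⟨hlx, hxb⟩
    linarith

end TangentLine

section AffineMinorant

variable {Ω : Type*} [MeasurableSpace Ω] {μ : Measure Ω} [IsProbabilityMeasure μ]
  {F Y : Ω → ℝ≥0∞} {M s c : ℝ≥0∞}

theorem add_mul_le_lintegral_affine (hY : AEMeasurable Y μ) (hmean : c ≤ ∫⁻ ω, Y ω ∂μ) :
    M + s * c ≤ ∫⁻ ω, M + s * Y ω ∂μ := by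
  rw [lintegral_add_left measurable_const, lintegral_const_mul'' _ hY, lintegral_const,
    measure_univ, mul_one]
  gcongr

theorem lintegral_add_const_of_isProbabilityMeasure (F : Ω → ℝ≥0∞) (c : ℝ≥0∞) :
    ∫⁻ ω, F ω + c ∂μ = ∫⁻ ω, F ω ∂μ + c := by
  simp [lintegral_add_right _ measurable_const]

theorem le_lintegral_of_affine_le (hY : AEMeasurable Y μ) (hmean : c ≤ ∫⁻ ω, Y ω ∂μ)
    (hsc : s * c ≠ ∞) (hFY : ∀ᵐ ω ∂μ, M + s * Y ω ≤ F ω + s * c) : M ≤ ∫⁻ ω, F ω ∂μ := by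
  refine (ENNReal.add_le_add_iff_right hsc).1 ?_
  calc M + s * c ≤ ∫⁻ ω, M + s * Y ω ∂μ := add_mul_le_lintegral_affine hY hmean
    _ ≤ ∫⁻ ω, F ω + s * c ∂μ := lintegral_mono_ae hFY
    _ = ∫⁻ ω, F ω ∂μ + s * c := lintegral_add_const_of_isProbabilityMeasure F _

theorem ae_affine_eq_of_lintegral_eq (hY : AEMeasurable Y μ) (hF : AEMeasurable F μ)
    (hmean : c ≤ ∫⁻ ω, Y ω ∂μ) (hsc : s * c ≠ ∞) (hM : M ≠ ∞)
    (hFY : ∀ᵐ ω ∂μ, M + s * Y ω ≤ F ω + s * c) (hFM : ∫⁻ ω, F ω ∂μ = M) :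
    ∀ᵐ ω ∂μ, M + s * Y ω = F ω + s * c := by
  have integral_right : ∫⁻ ω, F ω + s * c ∂μ = M + s * c := by
    rw [lintegral_add_const_of_isProbabilityMeasure, hFM]
  refine ae_eq_of_ae_le_of_lintegral_le hFY ?_ (hF.add_const _) ?_
  · exact ne_top_of_le_ne_top (ENNReal.add_ne_top.2 ⟨hM, hsc⟩)
      ((lintegral_mono_ae hFY).trans_eq integral_right)
  · exact integral_right.trans_le (add_mul_le_lintegral_affine hY hmean)

theorem ae_eq_const_of_ae_le_of_le_lintegral (hc : c ≠ ∞) (hYc : ∀ᵐ ω ∂μ, Y ω ≤ c)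
    (hmean : c ≤ ∫⁻ ω, Y ω ∂μ) : ∀ᵐ ω ∂μ, Y ω = c := by
  have integral_const : ∫⁻ _, c ∂μ = c := by simp
  refine ae_eq_of_ae_le_of_lintegral_le hYc ?_ aemeasurable_const (integral_const.trans_le hmean)
  exact ne_top_of_le_ne_top hc ((lintegral_mono_ae hYc).trans_eq integral_const)

end AffineMinorant

section SupportingLine

variable {φ : ℝ → ℝ} {c s x : ℝ}

theorem ofReal_add_mul_le_of_supporting_line (hs : 0 ≤ s) (hx : 0 ≤ x) (hφc : 0 ≤ φ c)
    (h : φ c + s * (x - c) ≤ φ x) :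
    ENNReal.ofReal (φ c) + ENNReal.ofReal s * ENNReal.ofReal x ≤
      ENNReal.ofReal (φ x) + ENNReal.ofReal s * ENNReal.ofReal c := by
  rw [← ENNReal.ofReal_mul hs, ← ENNReal.ofReal_mul hs, ← ENNReal.ofReal_add hφc (by positivity)]
  exact (ENNReal.ofReal_le_ofReal (by linarith)).trans ENNReal.ofReal_add_le

theorem ofReal_add_mul_lt_of_supporting_line (hs : 0 ≤ s) (hx : 0 ≤ x) (hφc : 0 ≤ φ c)
    (h : φ c + s * (x - c) < φ x) :
    ENNReal.ofReal (φ c) + ENNReal.ofReal s * ENNReal.ofReal x <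
      ENNReal.ofReal (φ x) + ENNReal.ofReal s * ENNReal.ofReal c := by
  rw [← ENNReal.ofReal_mul hs, ← ENNReal.ofReal_mul hs, ← ENNReal.ofReal_add hφc (by positivity)]
  refine lt_of_lt_of_le ?_ ENNReal.ofReal_add_le
  exact (ENNReal.ofReal_lt_ofReal_iff_of_nonneg (by positivity)).2 (by linarith)

variable {Ω : Type*} [MeasurableSpace Ω] {μ : Measure Ω} [IsProbabilityMeasure μ] {X : Ω → ℝ}

theorem ofReal_le_lintegral_of_supporting_line (hX : AEMeasurable X μ) (hX0 : 0 ≤ᵐ[μ] X)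
    (hmean : ENNReal.ofReal c ≤ ∫⁻ ω, ENNReal.ofReal (X ω) ∂μ) (hs : 0 ≤ s) (hφc : 0 ≤ φ c)
    (hφ : ∀ x, 0 ≤ x → φ c + s * (x - c) ≤ φ x) :
    ENNReal.ofReal (φ c) ≤ ∫⁻ ω, ENNReal.ofReal (φ (X ω)) ∂μ := by
  refine le_lintegral_of_affine_le hX.ennreal_ofReal hmean
    (ENNReal.mul_ne_top (ENNReal.ofReal_ne_top (r := s)) ENNReal.ofReal_ne_top) ?_
  filter_upwards [hX0] with ω hω
  exact ofReal_add_mul_le_of_supporting_line hs hω hφc (hφ _ hω)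

theorem lintegral_eq_iff_ae_eq_of_supporting_line (hX : AEMeasurable X μ) (hX0 : 0 ≤ᵐ[μ] X)
    (hmean : ENNReal.ofReal c ≤ ∫⁻ ω, ENNReal.ofReal (X ω) ∂μ) (hc : 0 ≤ c) (hs : 0 ≤ s)
    (hφm : Measurable φ) (hφc : 0 ≤ φ c) (hφ : ∀ x, 0 ≤ x → φ c + s * (x - c) ≤ φ x)
    (hφ' : ∀ x, c < x → φ c + s * (x - c) < φ x) :
    ∫⁻ ω, ENNReal.ofReal (φ (X ω)) ∂μ = ENNReal.ofReal (φ c) ↔ X =ᵐ[μ] fun _ => c := by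
  refine ⟨fun heq => ?_, fun hXc => ?_⟩
  · have hcontact := ae_affine_eq_of_lintegral_eq hX.ennreal_ofReal
      (hφm.comp_aemeasurable hX).ennreal_ofReal hmean
      (ENNReal.mul_ne_top (ENNReal.ofReal_ne_top (r := s)) ENNReal.ofReal_ne_top)
      ENNReal.ofReal_ne_top
      (hX0.mono fun ω hω => ofReal_add_mul_le_of_supporting_line hs hω hφc (hφ _ hω)) heq
    have hXc : ∀ᵐ ω ∂μ, ENNReal.ofReal (X ω) ≤ ENNReal.ofReal c := by
      filter_upwards [hcontact, hX0] with ω hω hω0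
      refine ENNReal.ofReal_le_ofReal ?_
      by_contra! hlt
      exact (ofReal_add_mul_lt_of_supporting_line hs hω0 hφc (hφ' _ hlt)).ne hω
    filter_upwards [ae_eq_const_of_ae_le_of_le_lintegral ENNReal.ofReal_ne_top hXc hmean, hX0]
      with ω hω hω0
    exact (ENNReal.ofReal_eq_ofReal_iff hω0 hc).1 hω
  · rw [lintegral_congr_ae (hXc.mono fun ω hω => by rw [hω]), lintegral_const, measure_univ,
      mul_one]

end SupportingLine

section EnergyDensity

variable {n a u x : ℝ}

/-- The integrand `E` of the energy as a function of the value `x ≥ 0` of the random variable, for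
a real dimension `n` and with `a` in place of `α²`. -/
noncomputable def energyDensity (n a x : ℝ) : ℝ :=
  (a + (n - 1) * x ^ (2 / (n - 1))) ^ (n / 2)

/-- The derivative of `energyDensity n a` at `x > 0`, expressed in the variable
`u = x ^ (2 / (n - 1))`. -/
noncomputable def energySlope (n a u : ℝ) : ℝ :=
  n * ((a + (n - 1) * u) ^ ((n - 2) / 2) * u ^ ((3 - n) / 2))

/-- The point of `[0, ∞)` at which `energyDensity n a` turns from concave to convex; it is `0` when
`n ≤ 3`, where the density is convex throughout. -/
noncomputable def energyInflection (n a : ℝ) : ℝ :=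
  max 0 ((n - 3) * a / (n - 1)) ^ ((n - 1) / 2)

theorem energyDensity_one (n a : ℝ) : energyDensity n a 1 = (a + (n - 1)) ^ (n / 2) := by
  simp [energyDensity]

theorem energyDensity_zero (hn : 1 < n) (a : ℝ) : energyDensity n a 0 = a ^ (n / 2) := by
  have hexp : 2 / (n - 1) ≠ 0 := (div_pos two_pos (sub_pos.2 hn)).ne'
  simp [energyDensity, Real.zero_rpow hexp]

theorem energySlope_one (n a : ℝ) : energySlope n a 1 = n * (a + (n - 1)) ^ ((n - 2) / 2) := by
  simp [energySlope]

theorem energySlope_one_nonneg (hn : 1 < n) (ha : 0 ≤ a) : 0 ≤ energySlope n a 1 := by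
  rw [energySlope_one]
  exact mul_nonneg (zero_lt_one.trans hn).le
    (Real.rpow_nonneg (add_nonneg ha (sub_pos.2 hn).le) _)

theorem energyDensity_one_nonneg (hn : 1 < n) (ha : 0 ≤ a) : 0 ≤ energyDensity n a 1 := by
  rw [energyDensity_one]
  exact Real.rpow_nonneg (add_nonneg ha (sub_pos.2 hn).le) _

theorem measurable_energyDensity (n a : ℝ) : Measurable (energyDensity n a) := by
  unfold energyDensity
  fun_prop

theorem continuous_energyDensity (hn : 1 < n) (a : ℝ) : Continuous (energyDensity n a) := by
  have : 0 < n - 1 := sub_pos.2 hn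
  refine Continuous.rpow_const ?_ fun _ => Or.inr (by positivity)
  exact ((Real.continuous_rpow_const (by positivity)).const_mul _).const_add _

theorem hasDerivAt_energyDensity (hn : 1 < n) (ha : 0 ≤ a) (hx : 0 < x) :
    HasDerivAt (energyDensity n a) (energySlope n a (x ^ (2 / (n - 1)))) x := by
  have hn' : 0 < n - 1 := sub_pos.2 hn
  have hbase : 0 < a + (n - 1) * x ^ (2 / (n - 1)) := by positivity
  have hinner : HasDerivAt (fun y : ℝ => a + (n - 1) * y ^ (2 / (n - 1)))
      ((n - 1) * (2 / (n - 1) * x ^ (2 / (n - 1) - 1))) x :=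
    ((Real.hasDerivAt_rpow_const (Or.inl hx.ne')).const_mul _).const_add _
  have hpow : (x ^ (2 / (n - 1))) ^ ((3 - n) / 2) = x ^ (2 / (n - 1) - 1) := by
    rw [← Real.rpow_mul hx.le]
    congr 1
    field_simp
    ring
  refine (hinner.rpow_const (p := n / 2) (Or.inl hbase.ne')).congr_deriv ?_
  rw [energySlope, hpow, show n / 2 - 1 = (n - 2) / 2 by ring]
  field_simp

theorem deriv_energyDensity (hn : 1 < n) (ha : 0 ≤ a) (hx : 0 < x) :
    deriv (energyDensity n a) x = energySlope n a (x ^ (2 / (n - 1))) :=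
  (hasDerivAt_energyDensity hn ha hx).deriv

theorem hasDerivAt_energySlope (hn : 1 < n) (ha : 0 ≤ a) (hu : 0 < u) :
    HasDerivAt (energySlope n a)
      (n / 2 * ((a + (n - 1) * u) ^ ((n - 4) / 2) * u ^ ((1 - n) / 2)) *
        ((n - 1) * u - (n - 3) * a)) u := by
  have : 0 < n - 1 := sub_pos.2 hn
  have hbase : 0 < a + (n - 1) * u := by positivity
  have hinner : HasDerivAt (fun v : ℝ => a + (n - 1) * v) ((n - 1) * 1) u :=
    ((hasDerivAt_id u).const_mul (n - 1)).const_add a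
  have hbase_pow : (a + (n - 1) * u) ^ ((n - 2) / 2) =
      (a + (n - 1) * u) ^ ((n - 4) / 2) * (a + (n - 1) * u) := by
    rw [← Real.rpow_add_one hbase.ne']
    congr 1
    ring
  have hu_pow : u ^ ((3 - n) / 2) = u ^ ((1 - n) / 2) * u := by
    rw [← Real.rpow_add_one hu.ne']
    congr 1
    ring
  refine (((hinner.rpow_const (p := (n - 2) / 2) (Or.inl hbase.ne')).mul
    (Real.hasDerivAt_rpow_const (p := (3 - n) / 2) (Or.inl hu.ne'))).const_mul n).congr_deriv ?_
  rw [show (n - 2) / 2 - 1 = (n - 4) / 2 by ring, show (3 - n) / 2 - 1 = (1 - n) / 2 by ring,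
    hbase_pow, hu_pow]
  ring

theorem strictAntiOn_energySlope (hn : 1 < n) (ha : 0 ≤ a) :
    StrictAntiOn (energySlope n a) (Ioo 0 ((n - 3) * a / (n - 1))) := by
  have hn' : 0 < n - 1 := sub_pos.2 hn
  refine strictAntiOn_of_deriv_neg (convex_Ioo _ _)
    (fun u hu => (hasDerivAt_energySlope hn ha hu.1).continuousAt.continuousWithinAt) ?_
  rw [interior_Ioo]
  rintro u ⟨hu, hua⟩
  rw [(hasDerivAt_energySlope hn ha hu).deriv]
  rw [lt_div_iff₀ hn'] at hua
  exact mul_neg_of_pos_of_neg (by positivity) (by linarith)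

theorem strictMonoOn_energySlope (hn : 1 < n) (ha : 0 ≤ a) :
    StrictMonoOn (energySlope n a) (Ioi (max 0 ((n - 3) * a / (n - 1)))) := by
  have hn' : 0 < n - 1 := sub_pos.2 hn
  refine strictMonoOn_of_deriv_pos (convex_Ioi _)
    (fun u hu => (hasDerivAt_energySlope hn ha
      (max_lt_iff.1 hu).1).continuousAt.continuousWithinAt) ?_
  rw [interior_Ioi]
  intro u (hu : max 0 _ < u)
  obtain ⟨hu, hua⟩ := max_lt_iff.1 hu
  rw [(hasDerivAt_energySlope hn ha hu).deriv]
  rw [div_lt_iff₀ hn'] at hua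
  exact mul_pos (by positivity) (by linarith)

theorem energyInflection_nonneg (n a : ℝ) : 0 ≤ energyInflection n a :=
  Real.rpow_nonneg (le_max_left _ _) _

theorem rpow_mem_Ioo_of_mem_Ioo_energyInflection (hn : 1 < n)
    (hx : x ∈ Ioo 0 (energyInflection n a)) :
    x ^ (2 / (n - 1)) ∈ Ioo 0 ((n - 3) * a / (n - 1)) := by
  have : 0 < n - 1 := sub_pos.2 hn
  have hpos : 0 < x ^ (2 / (n - 1)) := Real.rpow_pos_of_pos hx.1 _
  have hlt : x ^ (2 / (n - 1)) < max 0 ((n - 3) * a / (n - 1)) := by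
    rw [← inv_div (n - 1) 2, Real.rpow_inv_lt_iff_of_pos hx.1.le (le_max_left _ _) (by positivity)]
    exact hx.2
  exact ⟨hpos, (lt_max_iff.1 hlt).resolve_left hpos.not_gt⟩

theorem max_lt_rpow_of_energyInflection_lt (hn : 1 < n) (hx : energyInflection n a < x) :
    max 0 ((n - 3) * a / (n - 1)) < x ^ (2 / (n - 1)) := by
  have : 0 < n - 1 := sub_pos.2 hn
  rw [← inv_div (n - 1) 2, Real.lt_rpow_inv_iff_of_pos (le_max_left _ _)
    ((energyInflection_nonneg n a).trans hx.le) (by positivity)]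
  exact hx

theorem strictMonoOn_rpow_two_div (hn : 1 < n) :
    StrictMonoOn (fun x : ℝ => x ^ (2 / (n - 1))) (Ici 0) :=
  Real.strictMonoOn_rpow_Ici_of_exponent_pos (div_pos two_pos (sub_pos.2 hn))

theorem strictConcaveOn_energyDensity (hn : 1 < n) (ha : 0 ≤ a) :
    StrictConcaveOn ℝ (Icc 0 (energyInflection n a)) (energyDensity n a) := by
  refine StrictAntiOn.strictConcaveOn_of_deriv (convex_Icc _ _)
    (continuous_energyDensity hn a).continuousOn ?_
  rw [interior_Icc]
  intro x hx y hy hxy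
  rw [deriv_energyDensity hn ha hx.1, deriv_energyDensity hn ha hy.1]
  exact strictAntiOn_energySlope hn ha (rpow_mem_Ioo_of_mem_Ioo_energyInflection hn hx)
    (rpow_mem_Ioo_of_mem_Ioo_energyInflection hn hy)
    (strictMonoOn_rpow_two_div hn hx.1.le hy.1.le hxy)

theorem strictConvexOn_energyDensity (hn : 1 < n) (ha : 0 ≤ a) :
    StrictConvexOn ℝ (Ici (energyInflection n a)) (energyDensity n a) := by
  refine StrictMonoOn.strictConvexOn_of_deriv (convex_Ici _)
    (continuous_energyDensity hn a).continuousOn ?_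
  rw [interior_Ici]
  intro x hx y hy hxy
  have hx0 : 0 < x := (energyInflection_nonneg n a).trans_lt hx
  have hy0 : 0 < y := hx0.trans hxy
  rw [deriv_energyDensity hn ha hx0, deriv_energyDensity hn ha hy0]
  exact strictMonoOn_energySlope hn ha (max_lt_rpow_of_energyInflection_lt hn hx)
    (max_lt_rpow_of_energyInflection_lt hn hy)
    (strictMonoOn_rpow_two_div hn hx0.le hy0.le hxy)

theorem energyDensity_one_sub_energySlope_one (hn : 1 < n) (ha : 0 ≤ a) :
    energyDensity n a 1 - energySlope n a 1 = (a + (n - 1)) ^ ((n - 2) / 2) * (a - 1) := by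
  have hbase : 0 < a + (n - 1) := add_pos_of_nonneg_of_pos ha (sub_pos.2 hn)
  rw [energyDensity_one, energySlope_one, show n / 2 = (n - 2) / 2 + 1 by ring,
    Real.rpow_add_one hbase.ne']
  ring

theorem energyDensity_tangent_zero_le (hn : 1 < n) (ha : 0 ≤ a)
    (hcrit : (a + (n - 1)) ^ ((n - 2) / 2) * (a - 1) ≤ a ^ (n / 2)) :
    energyDensity n a 1 + energySlope n a 1 * (0 - 1) ≤ energyDensity n a 0 := by
  rw [energyDensity_zero hn]
  linarith [energyDensity_one_sub_energySlope_one hn ha]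

theorem energyDensity_tangent_lt (hn : 1 < n) (ha : 0 ≤ a)
    (hcrit : (a + (n - 1)) ^ ((n - 2) / 2) * (a - 1) ≤ a ^ (n / 2)) (hx : 0 < x) (hx1 : x ≠ 1) :
    energyDensity n a 1 + energySlope n a 1 * (x - 1) < energyDensity n a x := by
  have hderiv : HasDerivAt (energyDensity n a) (energySlope n a 1) 1 := by
    simpa only [Real.one_rpow] using hasDerivAt_energyDensity hn ha one_pos
  exact tangent_lt_of_strictConcaveOn_of_strictConvexOn (strictConcaveOn_energyDensity hn ha)
    (strictConvexOn_energyDensity hn ha) hderiv one_pos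
    (energyDensity_tangent_zero_le hn ha hcrit) hx hx1

theorem energyDensity_tangent_le (hn : 1 < n) (ha : 0 ≤ a)
    (hcrit : (a + (n - 1)) ^ ((n - 2) / 2) * (a - 1) ≤ a ^ (n / 2)) (hx : 0 ≤ x) :
    energyDensity n a 1 + energySlope n a 1 * (x - 1) ≤ energyDensity n a x := by
  rcases hx.eq_or_lt with rfl | hx
  · exact energyDensity_tangent_zero_le hn ha hcrit
  rcases eq_or_ne x 1 with rfl | hx1
  · simp
  · exact (energyDensity_tangent_lt hn ha hcrit hx hx1).le

end EnergyDensity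

theorem stmt14_general {n : ℝ} (hn : 1 < n)
    {Ω : Type*} [MeasurableSpace Ω] {μ : Measure Ω} [IsProbabilityMeasure μ]
    {X : Ω → ℝ} (hX : AEMeasurable X μ) (hX0 : 0 ≤ᵐ[μ] X)
    (hmean : 1 ≤ ∫⁻ ω, ENNReal.ofReal (X ω) ∂μ) {α : ℝ} (hα : 0 ≤ α)
    (hcrit : (α ^ 2 + n - 1) ^ ((n - 2) / 2) * (α ^ 2 - 1) ≤ α ^ n) :
    ENNReal.ofReal ((α ^ 2 + n - 1) ^ (n / 2)) ≤
      ∫⁻ ω, ENNReal.ofReal ((α ^ 2 + (n - 1) * X ω ^ (2 / (n - 1))) ^ (n / 2)) ∂μ ∧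
    (∫⁻ ω, ENNReal.ofReal ((α ^ 2 + (n - 1) * X ω ^ (2 / (n - 1))) ^ (n / 2)) ∂μ =
      ENNReal.ofReal ((α ^ 2 + n - 1) ^ (n / 2)) ↔ X =ᵐ[μ] fun _ => 1) := by
  have ha : 0 ≤ α ^ 2 := sq_nonneg α
  have hpow : (α ^ 2) ^ (n / 2) = α ^ n := by
    rw [← Real.rpow_natCast_mul hα]
    congr 1
    push_cast
    ring
  rw [add_sub_assoc, ← hpow] at hcrit
  rw [add_sub_assoc, ← energyDensity_one]
  rw [← ENNReal.ofReal_one] at hmean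
  have hs := energySlope_one_nonneg hn ha
  have hE := energyDensity_one_nonneg hn ha
  have htangent (x : ℝ) (hx : 0 ≤ x) := energyDensity_tangent_le hn ha hcrit hx
  have htangent_lt (x : ℝ) (hx : 1 < x) :=
    energyDensity_tangent_lt hn ha hcrit (zero_lt_one.trans hx) hx.ne'
  exact ⟨ofReal_le_lintegral_of_supporting_line hX hX0 hmean hs hE htangent,
    lintegral_eq_iff_ae_eq_of_supporting_line hX hX0 hmean zero_le_one hs
      (measurable_energyDensity n _) hE htangent htangent_lt⟩

/-- Case 1 of the random-variable energy minimization.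
Let `(Ω, μ)` be a probability space, `X ≥ 0` measurable with
`∫ X dμ ≥ 1`, and `α > 0` with `(α² + n - 1)^((n-2)/2)(α² - 1) ≤ α^n`.
Then `∫ (α² + (n-1)X^(2/(n-1)))^(n/2) dμ ≥ (α² + n - 1)^(n/2)`, with
equality iff `X = 1` a.e.  (The integrals are Lebesgue integrals of
nonnegative functions, allowed to be `+∞`.) -/
theorem stmt14 (n : ℕ) (hn : 2 ≤ n)
    {Ω : Type*} [MeasurableSpace Ω] (μ : Measure Ω) [IsProbabilityMeasure μ]
    (X : Ω → ℝ) (hXmeas : Measurable X) (hX0 : ∀ ω, 0 ≤ X ω)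
    (hmean : 1 ≤ ∫⁻ ω, ENNReal.ofReal (X ω) ∂μ)
    (α : ℝ) (hα : 0 < α)
    (hcrit : (α ^ 2 + (n : ℝ) - 1) ^ (((n : ℝ) - 2) / 2) * (α ^ 2 - 1) ≤ α ^ (n : ℝ)) :
    ENNReal.ofReal ((α ^ 2 + (n : ℝ) - 1) ^ ((n : ℝ) / 2)) ≤
      (∫⁻ ω, ENNReal.ofReal
        ((α ^ 2 + ((n : ℝ) - 1) * (X ω) ^ ((2 : ℝ) / ((n : ℝ) - 1))) ^ ((n : ℝ) / 2)) ∂μ) ∧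
    ((∫⁻ ω, ENNReal.ofReal
        ((α ^ 2 + ((n : ℝ) - 1) * (X ω) ^ ((2 : ℝ) / ((n : ℝ) - 1))) ^ ((n : ℝ) / 2)) ∂μ) =
      ENNReal.ofReal ((α ^ 2 + (n : ℝ) - 1) ^ ((n : ℝ) / 2)) ↔
      X =ᵐ[μ] fun _ => 1) :=
  stmt14_general (Nat.one_lt_cast.2 hn) hXmeas.aemeasurable (.of_forall hX0) hmean hα.le hcrit
end

section
/- Let α > 0 and define F : (0, ∞) → ℝ by F(s) = ( α² + (n−1)·s^{2/(n−1)} )^{n/2}. If n ∈ {2, 3}, then F is convex on (0, ∞). If n ≥ 4, then, with s₀ = ((n−3)/(n−1))^{(n−1)/2} · α^{n−1}, the function F is strictly concave on (0, s₀) and strictly convex on (s₀, ∞). -/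
/-!
Let `a, b, p > 0` and `p q > 1`. The second derivative of `s ↦ (a + b s ^ p) ^ q` on `(0, ∞)` is a
positive factor times `b (p q - 1) s ^ p - (1 - p) a`, which is increasing in `s`: it is positive
throughout if `p ≥ 1`, and changes sign exactly once, from negative to positive, if `p < 1`.
The integrand is the case `p = 2 / (n - 1)`, `q = n / 2`, where `b (p q - 1) = 1`, and `p < 1` means
`n > 3`.
-/

open Set Topology

/-- The function `s ↦ (a + b s ^ p) ^ q`, of which the variational integrand is the case
`a = α ^ 2`, `b = n - 1`, `p = 2 / (n - 1)`, `q = n / 2`. It is meant for `s > 0`; for `s ≤ 0` its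
values are those dictated by the conventions for `Real.rpow`. -/
noncomputable def affinePower (a b p q : ℝ) (s : ℝ) : ℝ :=
  (a + b * s ^ p) ^ q

/-- The point where the second derivative of `affinePower a b p q` changes sign. It has this meaning
for `0 < p < 1 < p * q`, `0 < a` and `0 < b`. -/
noncomputable def inflectionPoint (a b p q : ℝ) : ℝ :=
  ((1 - p) * a / (b * (p * q - 1))) ^ p⁻¹

section Derivatives

variable {a b p s : ℝ}

theorem hasDerivAt_affinePower (q : ℝ) (hs : s ≠ 0) (hbase : a + b * s ^ p ≠ 0) :
    HasDerivAt (affinePower a b p q)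
      (p * q * b * ((a + b * s ^ p) ^ (q - 1) * s ^ (p - 1))) s := by
  have hbase_deriv : HasDerivAt (fun t ↦ a + b * t ^ p) (b * (p * s ^ (p - 1))) s :=
    ((Real.hasDerivAt_rpow_const (Or.inl hs)).const_mul b).const_add a
  exact (hbase_deriv.rpow_const (p := q) (Or.inl hbase)).congr_deriv (by ring)

theorem deriv_affinePower_eventuallyEq (q : ℝ) (hs : s ≠ 0) (hbase : a + b * s ^ p ≠ 0) :
    deriv (affinePower a b p q) =ᶠ[𝓝 s]
      fun t ↦ p * q * b * (affinePower a b p (q - 1) t * t ^ (p - 1)) := by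
  have hbase_cont : ContinuousAt (fun t ↦ a + b * t ^ p) s :=
    ((Real.continuousAt_rpow_const s p (Or.inl hs)).const_mul b).const_add a
  filter_upwards [isOpen_ne.mem_nhds hs, hbase_cont.eventually_ne hbase] with t ht ht_base
  exact (hasDerivAt_affinePower q ht ht_base).deriv

theorem deriv2_affinePower (q : ℝ) (hs : s ≠ 0) (hbase : a + b * s ^ p ≠ 0) :
    deriv^[2] (affinePower a b p q) s =
      p * q * b * (a + b * s ^ p) ^ (q - 2) * s ^ (p - 2) *
        (b * (p * q - 1) * s ^ p - (1 - p) * a) := by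
  have hderiv : HasDerivAt (fun t ↦ p * q * b * (affinePower a b p (q - 1) t * t ^ (p - 1))) _ s :=
    ((hasDerivAt_affinePower (q - 1) hs hbase).mul
      (Real.hasDerivAt_rpow_const (Or.inl hs))).const_mul (p * q * b)
  have base_rpow : (a + b * s ^ p) ^ (q - 1) = (a + b * s ^ p) ^ (q - 2) * (a + b * s ^ p) := by
    rw [← Real.rpow_add_one hbase]
    ring_nf
  have rpow_mul_rpow : s ^ (p - 1) * s ^ (p - 1) = s ^ (p - 2) * s ^ p := by
    rw [show p - 2 = p - 1 - 1 by ring, Real.rpow_sub_one hs (p - 1), Real.rpow_sub_one hs p]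
    ring
  calc deriv^[2] (affinePower a b p q) s
      = deriv (fun t ↦ p * q * b * (affinePower a b p (q - 1) t * t ^ (p - 1))) s :=
        (deriv_affinePower_eventuallyEq q hs hbase).deriv_eq
    _ = p * q * b * (p * (q - 1) * b * (a + b * s ^ p) ^ (q - 2) * (s ^ (p - 1) * s ^ (p - 1)) +
          (a + b * s ^ p) ^ (q - 1) * ((p - 1) * s ^ (p - 2))) := by
        rw [hderiv.deriv, affinePower, show q - 1 - 1 = q - 2 by ring,
          show p - 1 - 1 = p - 2 by ring]
        ring
    _ = _ := by
        rw [base_rpow, rpow_mul_rpow]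
        ring

end Derivatives

section Convexity

variable {a b p q s : ℝ}

theorem continuousOn_affinePower (q : ℝ) (ha : 0 ≤ a) (hb : 0 < b) :
    ContinuousOn (affinePower a b p q) (Ioi 0) := fun s (hs : 0 < s) ↦
  (hasDerivAt_affinePower q hs.ne' (by positivity)).continuousAt.continuousWithinAt

theorem deriv2_affinePower_pos_iff (ha : 0 ≤ a) (hb : 0 < b) (hpq : 0 < p * q) (hs : 0 < s) :
    0 < deriv^[2] (affinePower a b p q) s ↔ (1 - p) * a < b * (p * q - 1) * s ^ p := by
  rw [deriv2_affinePower q hs.ne' (by positivity), mul_pos_iff_of_pos_left (by positivity), sub_pos]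

theorem deriv2_affinePower_neg_iff (ha : 0 ≤ a) (hb : 0 < b) (hpq : 0 < p * q) (hs : 0 < s) :
    deriv^[2] (affinePower a b p q) s < 0 ↔ b * (p * q - 1) * s ^ p < (1 - p) * a := by
  rw [deriv2_affinePower q hs.ne' (by positivity), ← neg_pos, ← mul_neg,
    mul_pos_iff_of_pos_left (by positivity), neg_sub, sub_pos]

theorem strictConvexOn_affinePower_Ioi_zero (ha : 0 ≤ a) (hb : 0 < b) (hp : 1 ≤ p)
    (hpq : 1 < p * q) : StrictConvexOn ℝ (Ioi 0) (affinePower a b p q) := by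
  refine strictConvexOn_of_deriv2_pos' (convex_Ioi 0) (continuousOn_affinePower q ha hb)
    fun s (hs : 0 < s) ↦ (deriv2_affinePower_pos_iff ha hb (by linarith) hs).2 ?_
  calc (1 - p) * a ≤ 0 := mul_nonpos_of_nonpos_of_nonneg (sub_nonpos.2 hp) ha
    _ < b * (p * q - 1) * s ^ p :=
      mul_pos (mul_pos hb (sub_pos.2 hpq)) (Real.rpow_pos_of_pos hs p)

theorem inflectionPoint_base_nonneg (ha : 0 ≤ a) (hb : 0 < b) (hp : p ≤ 1) (hpq : 1 < p * q) :
    0 ≤ (1 - p) * a / (b * (p * q - 1)) :=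
  div_nonneg (mul_nonneg (sub_nonneg.2 hp) ha) (mul_pos hb (sub_pos.2 hpq)).le

theorem inflectionPoint_nonneg (ha : 0 ≤ a) (hb : 0 < b) (hp : p ≤ 1) (hpq : 1 < p * q) :
    0 ≤ inflectionPoint a b p q :=
  Real.rpow_nonneg (inflectionPoint_base_nonneg ha hb hp hpq) p⁻¹

theorem lt_inflectionPoint_iff (ha : 0 ≤ a) (hb : 0 < b) (hp₀ : 0 < p) (hp₁ : p ≤ 1)
    (hpq : 1 < p * q) (hs : 0 ≤ s) :
    s < inflectionPoint a b p q ↔ b * (p * q - 1) * s ^ p < (1 - p) * a := by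
  have hbase := inflectionPoint_base_nonneg ha hb hp₁ hpq
  rw [inflectionPoint, Real.lt_rpow_inv_iff_of_pos hs hbase hp₀,
    lt_div_iff₀' (mul_pos hb (sub_pos.2 hpq))]

theorem inflectionPoint_lt_iff (ha : 0 ≤ a) (hb : 0 < b) (hp₀ : 0 < p) (hp₁ : p ≤ 1)
    (hpq : 1 < p * q) (hs : 0 ≤ s) :
    inflectionPoint a b p q < s ↔ (1 - p) * a < b * (p * q - 1) * s ^ p := by
  have hbase := inflectionPoint_base_nonneg ha hb hp₁ hpq
  rw [inflectionPoint, Real.rpow_inv_lt_iff_of_pos hbase hs hp₀,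
    div_lt_iff₀' (mul_pos hb (sub_pos.2 hpq))]

theorem strictConcaveOn_affinePower_Ioo (ha : 0 ≤ a) (hb : 0 < b) (hp₀ : 0 < p) (hp₁ : p ≤ 1)
    (hpq : 1 < p * q) :
    StrictConcaveOn ℝ (Ioo 0 (inflectionPoint a b p q)) (affinePower a b p q) :=
  strictConcaveOn_of_deriv2_neg' (convex_Ioo _ _)
    ((continuousOn_affinePower q ha hb).mono Ioo_subset_Ioi_self) fun _ hs ↦
      (deriv2_affinePower_neg_iff ha hb (by linarith) hs.1).2
        ((lt_inflectionPoint_iff ha hb hp₀ hp₁ hpq hs.1.le).1 hs.2)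

theorem strictConvexOn_affinePower_Ioi (ha : 0 ≤ a) (hb : 0 < b) (hp₀ : 0 < p) (hp₁ : p ≤ 1)
    (hpq : 1 < p * q) :
    StrictConvexOn ℝ (Ioi (inflectionPoint a b p q)) (affinePower a b p q) := by
  have hs₀ := inflectionPoint_nonneg ha hb hp₁ hpq
  refine strictConvexOn_of_deriv2_pos' (convex_Ioi _)
    ((continuousOn_affinePower q ha hb).mono (Ioi_subset_Ioi hs₀)) fun s hs ↦ ?_
  have hs_pos : 0 < s := hs₀.trans_lt hs
  exact (deriv2_affinePower_pos_iff ha hb (by linarith) hs_pos).2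
    ((inflectionPoint_lt_iff ha hb hp₀ hp₁ hpq hs_pos.le).1 hs)

end Convexity

theorem inflectionPoint_sq_two_div {ν α : ℝ} (hν : 3 ≤ ν) (hα : 0 ≤ α) :
    inflectionPoint (α ^ 2) (ν - 1) (2 / (ν - 1)) (ν / 2) =
      ((ν - 3) / (ν - 1)) ^ ((ν - 1) / 2) * α ^ (ν - 1) := by
  have hν₁ : 0 < ν - 1 := by linarith
  have hratio : 0 ≤ (ν - 3) / (ν - 1) := div_nonneg (by linarith) hν₁.le
  have harg : (1 - 2 / (ν - 1)) * α ^ 2 / ((ν - 1) * (2 / (ν - 1) * (ν / 2) - 1)) =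
      (ν - 3) / (ν - 1) * α ^ 2 := by
    have hdenom : (ν - 1) * (2 / (ν - 1) * (ν / 2) - 1) = 1 := by
      field_simp
      ring
    rw [hdenom]
    field_simp
    ring
  rw [inflectionPoint, harg, inv_div, Real.mul_rpow hratio (sq_nonneg α),
    ← Real.rpow_natCast_mul hα, Nat.cast_ofNat, mul_div_cancel₀ _ two_ne_zero]

theorem stmt16_general (ν : ℝ) (hν : 1 < ν) (α : ℝ) (hα : 0 ≤ α) (F : ℝ → ℝ)
    (hF : ∀ s, 0 < s → F s = (α ^ 2 + (ν - 1) * s ^ (2 / (ν - 1))) ^ (ν / 2)) :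
    (ν ≤ 3 → StrictConvexOn ℝ (Ioi 0) F) ∧
    (3 ≤ ν →
      StrictConcaveOn ℝ (Ioo 0 (((ν - 3) / (ν - 1)) ^ ((ν - 1) / 2) * α ^ (ν - 1))) F ∧
      StrictConvexOn ℝ (Ioi (((ν - 3) / (ν - 1)) ^ ((ν - 1) / 2) * α ^ (ν - 1))) F) := by
  have hb : 0 < ν - 1 := sub_pos.2 hν
  have hp₀ : 0 < 2 / (ν - 1) := by positivity
  have hpq : 1 < 2 / (ν - 1) * (ν / 2) := by
    rw [div_mul_div_cancel₀' two_ne_zero, one_lt_div hb]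
    linarith
  have hF_eq : EqOn (affinePower (α ^ 2) (ν - 1) (2 / (ν - 1)) (ν / 2)) F (Ioi 0) :=
    fun s hs ↦ (hF s hs).symm
  refine ⟨fun hν₃ ↦ ?_, fun hν₃ ↦ ?_⟩
  · have hp : 1 ≤ 2 / (ν - 1) := (one_le_div hb).2 (by linarith)
    exact (strictConvexOn_affinePower_Ioi_zero (sq_nonneg α) hb hp hpq).congr hF_eq
  · have hp₁ : 2 / (ν - 1) ≤ 1 := (div_le_one hb).2 (by linarith)
    have hs₀ := inflectionPoint_nonneg (sq_nonneg α) hb hp₁ hpq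
    rw [← inflectionPoint_sq_two_div hν₃ hα]
    exact ⟨(strictConcaveOn_affinePower_Ioo (sq_nonneg α) hb hp₀ hp₁ hpq).congr
        (hF_eq.mono Ioo_subset_Ioi_self),
      (strictConvexOn_affinePower_Ioi (sq_nonneg α) hb hp₀ hp₁ hpq).congr
        (hF_eq.mono (Ioi_subset_Ioi hs₀))⟩

/-- For `α > 0` and `F(s) = (α² + (n-1)s^(2/(n-1)))^(n/2)` on `(0,∞)`:
if `n ∈ {2,3}` then `F` is convex on `(0,∞)`; if `n ≥ 4` then, with
`s₀ = ((n-3)/(n-1))^((n-1)/2) α^(n-1)`, `F` is strictly concave on `(0, s₀)`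
and strictly convex on `(s₀, ∞)`. -/
theorem stmt16 (n : ℕ) (hn : 2 ≤ n) (α : ℝ) (hα : 0 < α)
    (F : ℝ → ℝ)
    (hF : ∀ s : ℝ, F s = (α ^ 2 + ((n : ℝ) - 1) * s ^ ((2 : ℝ) / ((n : ℝ) - 1))) ^ ((n : ℝ) / 2)) :
    ((n = 2 ∨ n = 3) → ConvexOn ℝ (Set.Ioi (0 : ℝ)) F) ∧
    (4 ≤ n →
      StrictConcaveOn ℝ
        (Set.Ioo (0 : ℝ)
          ((((n : ℝ) - 3) / ((n : ℝ) - 1)) ^ (((n : ℝ) - 1) / 2) * α ^ ((n : ℝ) - 1))) F ∧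
      StrictConvexOn ℝ
        (Set.Ioi ((((n : ℝ) - 3) / ((n : ℝ) - 1)) ^ (((n : ℝ) - 1) / 2) * α ^ ((n : ℝ) - 1)))
        F) := by
  have h := stmt16_general n (by exact_mod_cast hn) α hα.le F fun s _ ↦ hF s
  exact ⟨fun hn₃ ↦ (h.1 (by norm_cast; lia)).convexOn, fun hn₄ ↦ h.2 (by norm_cast; lia)⟩
end
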